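/- arXiv:1907.07019 — 2 statements merged into one kernel-verified Lean document; each statement's English description precedes it below -/
import Mathlib

section
/- Let Ω be an at most countable set. Then π₁ is boundedly commensurate to π₀ if and only if (π₀,π₁) satisfies extended Bayesianism and π₀*(S₁) > 0. -/
open MeasureTheory Set ENNReal

/-- The support of a measure `π` on `(Ω, m)`: the intersection of all `m`-measurable
sets of `π`-measure one. -/
def spt {Ω : Type*} (m : MeasurableSpace Ω) (π : @Measure Ω m) : Set Ω :=
  ⋂₀ {E : Set Ω | @MeasurableSet Ω m E ∧ π E = 1}

/-- The outer measure on richer events induced by a measure `π` on `(Ω, m)`: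
`π*(E) = inf {π F : F m-measurable, E ⊆ F}`. -/
noncomputable def outerM {Ω : Type*} (m : MeasurableSpace Ω) (π : @Measure Ω m)
    (E : Set Ω) : ℝ≥0∞ :=
  ⨅ (F : Set Ω) (_ : @MeasurableSet Ω m F ∧ E ⊆ F), π F

/-- Extended Bayesianism: there is a probability measure `π̄` on the finer σ-algebra `m1`
extending `π₀` (EB1) such that, whenever `π₀*(S₁) > 0`, `π̄(S₁) > 0` and `π₁` is the
conditional of `π̄` on `S₁` (EB2). -/
def ExtendedBayesianism {Ω : Type*} (m0 m1 : MeasurableSpace Ω)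
    (π₀ : @Measure Ω m0) (π₁ : @Measure Ω m1) : Prop :=
  ∃ πb : @Measure Ω m1, @IsProbabilityMeasure Ω m1 πb ∧
    (∀ E : Set Ω, @MeasurableSet Ω m0 E → πb E = π₀ E) ∧
    (0 < outerM m0 π₀ (spt m1 π₁) →
      0 < πb (spt m1 π₁) ∧
      ∀ E : Set Ω, @MeasurableSet Ω m1 E →
        π₁ E = πb (E ∩ spt m1 π₁) / πb (spt m1 π₁))

/-- `π₁` is commensurate to `π₀`: for all `E, F ∈ Σ₀` with `E ⊆ S₁`,
(C1) `π₀ F = 0 → π₁ F = 0` and (C2) `π₀ E * π₁ F ≤ π₁ E * π₀ F`. -/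
def Commensurate {Ω : Type*} (m0 m1 : MeasurableSpace Ω)
    (π₀ : @Measure Ω m0) (π₁ : @Measure Ω m1) : Prop :=
  ∀ E F : Set Ω, @MeasurableSet Ω m0 E → @MeasurableSet Ω m0 F → E ⊆ spt m1 π₁ →
    (π₀ F = 0 → π₁ F = 0) ∧ π₀ E * π₁ F ≤ π₁ E * π₀ F

/-- `π₁` is boundedly commensurate to `π₀`: commensurate, and in addition (C3)
`inf {π₀ F / π₁ F : F ∈ Σ₀, π₁ F > 0} > 0`. -/
def BoundedlyCommensurate {Ω : Type*} (m0 m1 : MeasurableSpace Ω)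
    (π₀ : @Measure Ω m0) (π₁ : @Measure Ω m1) : Prop :=
  Commensurate m0 m1 π₀ π₁ ∧
    0 < ⨅ (F : Set Ω) (_ : @MeasurableSet Ω m0 F ∧ 0 < π₁ F), π₀ F / π₁ F

theorem aux_g {Ω : Type*} [Countable Ω] [MeasurableSpace Ω] (S : Set Ω) :
    ∃ g : Ω → Ω, (∀ B : Set Ω, MeasurableSet (g ⁻¹' B)) ∧
      (∀ F : Set Ω, MeasurableSet F → g ⁻¹' F = F) ∧ g ⁻¹' S ⊆ S := by
  rcases isEmpty_or_nonempty Ω with hΩ | hΩ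
  · refine ⟨id, fun B => ?_, fun F _ => rfl, Subset.rfl⟩
    rw [Set.eq_empty_of_isEmpty (id ⁻¹' B)]
    exact MeasurableSet.empty
  have key : ∀ A : Set Ω, A.Nonempty → ∃ y ∈ A, (A \ S).Nonempty → y ∉ S := by
    intro A hA
    by_cases h : (A \ S).Nonempty
    · obtain ⟨y, hy⟩ := h
      exact ⟨y, hy.1, fun _ => hy.2⟩
    · obtain ⟨y, hy⟩ := hA
      exact ⟨y, hy, fun h' => absurd h' h⟩
  choose! k hk1 hk2 using key
  have hne : ∀ x : Ω, (measurableAtom x).Nonempty := fun x => ⟨x, mem_measurableAtom_self x⟩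
  refine ⟨fun x => k (measurableAtom x), ?_, ?_, ?_⟩
  · intro B
    have : (fun x => k (measurableAtom x)) ⁻¹' B
        = ⋃ x ∈ (fun x => k (measurableAtom x)) ⁻¹' B, measurableAtom x := by
      ext y
      simp only [mem_iUnion, exists_prop]
      constructor
      · intro hy
        exact ⟨y, hy, mem_measurableAtom_self y⟩
      · rintro ⟨x, hx, hyx⟩
        have := measurableAtom_eq_of_mem hyx
        simp only [mem_preimage] at hx ⊢
        rw [this]
        exact hx
    rw [this]
    exact MeasurableSet.biUnion (Set.to_countable _)
      (fun x _ => MeasurableSet.measurableAtom_of_countable x)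
  · intro F hF
    have h1 : ∀ F : Set Ω, MeasurableSet F → ∀ x ∈ F, k (measurableAtom x) ∈ F :=
      fun F hF x hx => measurableAtom_subset hF hx (hk1 _ (hne x))
    ext x
    constructor
    · intro hx
      by_contra hxF
      exact h1 Fᶜ hF.compl x hxF hx
    · exact h1 F hF x
  · intro x hx
    by_contra hxS
    exact hk2 _ (hne x) ⟨x, mem_measurableAtom_self x, hxS⟩ hx

theorem aux_sub {Ω : Type*} [MeasurableSpace Ω] (μ π : Measure Ω) [IsFiniteMeasure μ]
    (h : ∀ F, MeasurableSet F → μ F ≤ π F) :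
    ∃ ν : Measure Ω, ∀ F, MeasurableSet F → ν F + μ F = π F := by
  refine ⟨π - μ, fun F _ => ?_⟩
  rw [← Measure.add_apply, Measure.sub_add_cancel_of_le (Measure.le_iff.2 h)]

theorem aux_spt {Ω : Type*} [Countable Ω] [m : MeasurableSpace Ω] (π : Measure Ω)
    [IsProbabilityMeasure π] : MeasurableSet (spt m π) ∧ π (spt m π) = 1 := by
  have h : ∀ x : ↥(spt m π)ᶜ, ∃ E : Set Ω, MeasurableSet E ∧ π E = 1 ∧ x.1 ∉ E := by
    rintro ⟨x, hx⟩
    simp only [spt, mem_compl_iff, mem_sInter, mem_ofPred_eq, not_forall] at hx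
    obtain ⟨E, ⟨h1, h2⟩, h3⟩ := hx
    exact ⟨E, h1, h2, h3⟩
  choose E hE1 hE2 hE3 using h
  have hS : spt m π = ⋂ x, E x := by
    apply Subset.antisymm
    · exact subset_iInter fun x => sInter_subset_of_mem ⟨hE1 x, hE2 x⟩
    · intro y hy
      by_contra hyS
      exact hE3 ⟨y, hyS⟩ (mem_iInter.1 hy ⟨y, hyS⟩)
  have hm : MeasurableSet (spt m π) := by
    rw [hS]; exact MeasurableSet.iInter hE1
  refine ⟨hm, ?_⟩
  rw [← prob_compl_eq_zero_iff hm, hS, compl_iInter, measure_iUnion_null_iff]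
  intro x
  rw [prob_compl_eq_zero_iff (hE1 x)]
  exact hE2 x

theorem aux_c {Ω : Type*} (m0 m1 : MeasurableSpace Ω) (hle : m0 ≤ m1)
    (π₀ : @Measure Ω m0) (π₁ : @Measure Ω m1)
    (h₀ : @IsProbabilityMeasure Ω m0 π₀) (h₁ : @IsProbabilityMeasure Ω m1 π₁)
    (h : BoundedlyCommensurate m0 m1 π₀ π₁) :
    ∃ c : ℝ≥0∞, 0 < c ∧ c ≤ 1 ∧ (∀ F, MeasurableSet[m0] F → c * π₁ F ≤ π₀ F) ∧
      ∀ F, MeasurableSet[m0] F → F ⊆ spt m1 π₁ → c * π₁ F = π₀ F := by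
  obtain ⟨hC, hI⟩ := h
  have hu0 : π₀ univ = 1 := h₀.measure_univ
  have hu1 : π₁ univ = 1 := h₁.measure_univ
  have le1 : ∀ c : ℝ≥0∞, (∀ F, MeasurableSet[m0] F → c * π₁ F ≤ π₀ F) → c ≤ 1 := by
    intro c hc
    simpa [hu0, hu1] using hc univ (@MeasurableSet.univ Ω m0)
  have fin1 : ∀ F, π₁ F ≠ ∞ := fun F => measure_ne_top π₁ F
  have fin0 : ∀ F, π₀ F ≠ ∞ := fun F => @measure_ne_top Ω m0 π₀ _ F
  by_cases hE : ∃ E, MeasurableSet[m0] E ∧ E ⊆ spt m1 π₁ ∧ π₀ E ≠ 0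
  · obtain ⟨E, hEm, hES, hE0⟩ := hE
    have hE1 : π₁ E ≠ 0 := by
      intro h0
      have := (hC E univ hEm (@MeasurableSet.univ Ω m0) hES).2
      simp [hu0, hu1, h0] at this
      exact hE0 this
    have eqn : ∀ x, π₀ E / π₁ E * x = (π₀ E * x) / π₁ E := fun x => by
      rw [ENNReal.div_eq_inv_mul, ENNReal.div_eq_inv_mul, mul_assoc]
    have hb : ∀ F, MeasurableSet[m0] F → π₀ E / π₁ E * π₁ F ≤ π₀ F := by
      intro F hF
      rw [eqn]
      apply ENNReal.div_le_of_le_mul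
      rw [mul_comm (π₀ F)]
      exact (hC E F hEm hF hES).2
    refine ⟨π₀ E / π₁ E, ENNReal.div_pos hE0 (fin1 E), le1 _ hb, hb, ?_⟩
    intro F hF hFS
    refine le_antisymm (hb F hF) ?_
    rw [eqn, ENNReal.le_div_iff_mul_le (Or.inl hE1) (Or.inl (fin1 E)), mul_comm (π₀ E)]
    exact (hC F E hF hEm hFS).2
  · push Not at hE
    have hb : ∀ F, MeasurableSet[m0] F →
        (⨅ (F : Set Ω) (_ : MeasurableSet[m0] F ∧ 0 < π₁ F), π₀ F / π₁ F) * π₁ F ≤ π₀ F := by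
      intro F hF
      by_cases hF0 : π₁ F = 0
      · simp [hF0]
      · rw [← ENNReal.le_div_iff_mul_le (Or.inl hF0) (Or.inl (fin1 F))]
        exact iInf₂_le F ⟨hF, pos_iff_ne_zero.2 hF0⟩
    refine ⟨_, hI, le1 _ hb, hb, ?_⟩
    intro F hF hFS
    rw [hE F hF hFS, (hC F F hF hF hFS).1 (hE F hF hFS), mul_zero]

/-- Theorem 3: for an at most countable `Ω`, `π₁` is boundedly
commensurate to `π₀` iff `(π₀, π₁)` satisfies extended Bayesianism and `π₀*(S₁) > 0`. -/
theorem boundedlyCommensurate_iff_extendedBayesianism {Ω : Type*} [Countable Ω]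
    (m0 m1 : MeasurableSpace Ω) (hle : m0 ≤ m1)
    (π₀ : @Measure Ω m0) (π₁ : @Measure Ω m1)
    (h₀ : @IsProbabilityMeasure Ω m0 π₀) (h₁ : @IsProbabilityMeasure Ω m1 π₁) :
    BoundedlyCommensurate m0 m1 π₀ π₁ ↔
      ExtendedBayesianism m0 m1 π₀ π₁ ∧ 0 < outerM m0 π₀ (spt m1 π₁) := by
  have hu1 : π₁ univ = 1 := h₁.measure_univ
  obtain ⟨hSm, hS1⟩ := aux_spt π₁
  constructor
  · intro h
    obtain ⟨c, hc0, hc1, hcle, hceq⟩ := aux_c m0 m1 hle π₀ π₁ h₀ h₁ h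
    have hct : c ≠ ∞ := ne_top_of_le_ne_top one_ne_top hc1
    refine ⟨?_, ?_⟩
    · have htr : ∀ F, MeasurableSet[m0] F → (c • π₁).trim hle F = c * π₁ F := by
        intro F hF
        rw [trim_measurableSet_eq hle hF]
        simp
      have hfin : @IsFiniteMeasure Ω m0 ((c • π₁).trim hle) := by
        refine @IsFiniteMeasure.mk Ω m0 _ ?_
        rw [htr _ (@MeasurableSet.univ Ω m0), hu1, mul_one]
        exact hct.lt_top
      obtain ⟨ν, hν⟩ := @aux_sub Ω m0 ((c • π₁).trim hle) π₀ hfin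
        (fun F hF => by rw [htr F hF]; exact hcle F hF)
      obtain ⟨g, hg1, hg2, hg3⟩ := @aux_g Ω _ m0 (spt m1 π₁)
      have hgm : @Measurable Ω Ω m0 m1 g := fun B _ => hg1 B
      have hmap : ∀ B, MeasurableSet[m1] B → @Measure.map Ω Ω m0 m1 g ν B = ν (g ⁻¹' B) :=
        fun B hB => @Measure.map_apply Ω Ω m0 m1 ν g hgm B hB
      have hz : @Measure.map Ω Ω m0 m1 g ν (spt m1 π₁) = 0 := by
        rw [hmap _ hSm]
        have h1 := hν _ (hg1 (spt m1 π₁))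
        rw [htr _ (hg1 _), ← hceq _ (hg1 _) hg3] at h1
        have hfin2 : c * π₁ (g ⁻¹' (spt m1 π₁)) ≠ ∞ :=
          ENNReal.mul_ne_top hct (measure_ne_top π₁ _)
        exact (ENNReal.add_left_inj hfin2).1 (h1.trans (zero_add _).symm)
      have hext : ∀ E : Set Ω, MeasurableSet[m0] E →
          (c • π₁ + @Measure.map Ω Ω m0 m1 g ν) E = π₀ E := by
        intro E hE
        rw [Measure.add_apply, hmap E (hle E hE), hg2 E hE, ← hν E hE, htr E hE, add_comm]
        simp
      have hin : ∀ E : Set Ω, E ⊆ spt m1 π₁ →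
          (c • π₁ + @Measure.map Ω Ω m0 m1 g ν) E = c * π₁ E := by
        intro E hE
        rw [Measure.add_apply, measure_mono_null hE hz]
        simp
      refine ⟨c • π₁ + @Measure.map Ω Ω m0 m1 g ν, ⟨?_⟩, hext, fun _ => ⟨?_, ?_⟩⟩
      · rw [hext _ (@MeasurableSet.univ Ω m0)]
        exact h₀.measure_univ
      · rw [hin _ Subset.rfl, hS1, mul_one]
        exact hc0
      · intro E hE
        rw [hin _ Subset.rfl, hin _ inter_subset_right, hS1, mul_one,
          mul_comm, ENNReal.mul_div_cancel_right hc0.ne' hct]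
        refine (measure_inter_conull ?_).symm
        exact (prob_compl_eq_zero_iff hSm).2 hS1
    · refine lt_of_lt_of_le hc0 ?_
      refine le_iInf₂ fun F hF => ?_
      have h1 : π₁ F = 1 := le_antisymm prob_le_one (hS1 ▸ measure_mono hF.2)
      simpa [h1] using hcle F hF.1
  · rintro ⟨⟨πb, hb, hext, hB⟩, hpos⟩
    obtain ⟨hS0, hcond⟩ := hB hpos
    have hfin : ∀ F, πb F ≠ ∞ := fun F => measure_ne_top πb F
    have hmul : ∀ F, MeasurableSet[m1] F →
        π₁ F * πb (spt m1 π₁) = πb (F ∩ spt m1 π₁) := by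
      intro F hF
      rw [hcond F hF]
      exact ENNReal.div_mul_cancel hS0.ne' (hfin _)
    refine ⟨?_, ?_⟩
    · intro E F hE hF hES
      refine ⟨?_, ?_⟩
      · intro hF0
        rw [hcond F (hle F hF), measure_mono_null inter_subset_left ((hext F hF).trans hF0)]
        simp
      · rw [← ENNReal.mul_le_mul_iff_left hS0.ne' (hfin _), mul_assoc, hmul F (hle F hF),
          mul_right_comm, hmul E (hle E hE), inter_eq_left.2 hES, hext E hE, ← hext F hF]
        gcongr
        exact inter_subset_left
    · refine lt_of_lt_of_le hS0 ?_
      refine le_iInf₂ fun F hF => ?_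
      rw [ENNReal.le_div_iff_mul_le (Or.inl hF.2.ne') (Or.inl (measure_ne_top π₁ F)), mul_comm,
        hmul F (hle F hF.1), ← hext F hF.1]
      exact measure_mono inter_subset_left
end

section
/- Let Σ₀ ⊆ Σ₁ ⊆ Σ₂ be σ-algebras on a countable set Ω, with probability measures π₀, π₁, π₂ on Σ₀, Σ₁, Σ₂ respectively. Suppose (π₀,π₁) satisfies extended Bayesianism with witness π̄₀₁, π₀*(S₁) > 0, and π₂ is boundedly commensurate to π₁. Then π₂ is boundedly commensurate to π̄₀₁, i.e., for all E, F ∈ Σ₁ with E ⊆ S₂: π̄₀₁(F) = 0 implies π₂(F) = 0; π̄₀₁(E)·π₂(F) ≤ π₂(E)·π̄₀₁(F); and inf{π̄₀₁(F)/π₂(F) : F ∈ Σ₁, π₂(F) > 0} > 0. -/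
open MeasureTheory Set ENNReal

theorem spt_meas_aux {Ω : Type*} [Countable Ω] (m : MeasurableSpace Ω) (π : @Measure Ω m) :
    @MeasurableSet Ω m (spt m π) := by
  classical
  have h : ∀ ω : Ω, ∃ A : Set Ω, MeasurableSet A ∧ spt m π ⊆ A ∧ (ω ∉ spt m π → ω ∉ A) := by
    intro ω
    by_cases hω : ω ∈ spt m π
    · exact ⟨univ, MeasurableSet.univ, subset_univ _, fun h => absurd hω h⟩
    · have h2 := hω
      simp only [spt, mem_sInter, not_forall] at h2
      obtain ⟨A, hA, hn⟩ := h2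
      exact ⟨A, hA.1, sInter_subset_of_mem hA, fun _ => hn⟩
  choose A hA hs hn using h
  have : spt m π = ⋂ ω, A ω := by
    apply Subset.antisymm (subset_iInter hs)
    intro ω hω
    by_contra hc
    exact hn ω hc (mem_iInter.1 hω ω)
  rw [this]
  exact MeasurableSet.iInter hA

/-- key step of Theorem 4: if `(π₀, π₁)` satisfies extended Bayesianism
with witness `π̄₀₁`, `π₀*(S₁) > 0`, and `π₂` is boundedly commensurate to `π₁`, then `π₂`
is boundedly commensurate to `π̄₀₁`. -/
theorem witness_boundedlyCommensurate {Ω : Type*} [Countable Ω]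
    (m0 m1 m2 : MeasurableSpace Ω) (hle01 : m0 ≤ m1) (hle12 : m1 ≤ m2)
    (π₀ : @Measure Ω m0) (π₁ : @Measure Ω m1) (π₂ : @Measure Ω m2)
    (h₀ : @IsProbabilityMeasure Ω m0 π₀) (h₁ : @IsProbabilityMeasure Ω m1 π₁)
    (h₂ : @IsProbabilityMeasure Ω m2 π₂)
    (πb01 : @Measure Ω m1) (hb : @IsProbabilityMeasure Ω m1 πb01)
    (hEB1 : ∀ E : Set Ω, @MeasurableSet Ω m0 E → πb01 E = π₀ E)
    (hpos : 0 < outerM m0 π₀ (spt m1 π₁))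
    (hEB2 : 0 < πb01 (spt m1 π₁) ∧
      ∀ E : Set Ω, @MeasurableSet Ω m1 E →
        π₁ E = πb01 (E ∩ spt m1 π₁) / πb01 (spt m1 π₁))
    (hbc : BoundedlyCommensurate m1 m2 π₁ π₂) :
    BoundedlyCommensurate m1 m2 πb01 π₂ := by
  obtain ⟨hc0, hEB⟩ := hEB2
  obtain ⟨hcom, hinf⟩ := hbc
  have hS : @MeasurableSet Ω m1 (spt m1 π₁) := spt_meas_aux m1 π₁
  have hc1 : πb01 (spt m1 π₁) ≤ 1 := prob_le_one
  have hct : πb01 (spt m1 π₁) ≠ ⊤ := ne_top_of_le_ne_top one_ne_top hc1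
  have hmul : ∀ E : Set Ω, @MeasurableSet Ω m1 E →
      πb01 (spt m1 π₁) * π₁ E = πb01 (E ∩ spt m1 π₁) := by
    intro E hE
    rw [hEB E hE]
    exact ENNReal.mul_div_cancel hc0.ne' hct
  have hle : ∀ E : Set Ω, @MeasurableSet Ω m1 E → πb01 (spt m1 π₁) * π₁ E ≤ πb01 E := by
    intro E hE
    rw [hmul E hE]
    exact measure_mono inter_subset_left
  have hC1 : ∀ F : Set Ω, @MeasurableSet Ω m1 F → π₁ F = 0 → π₂ F = 0 := fun F hF =>
    (hcom ∅ F (@MeasurableSet.empty Ω m1) hF (empty_subset _)).1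
  have hcompl : π₁ (spt m1 π₁)ᶜ = 0 := by
    rw [hEB _ (@MeasurableSet.compl Ω _ m1 hS)]
    simp
  have h2S : π₂ (spt m1 π₁) = 1 :=
    (prob_compl_eq_zero_iff (hle12 _ hS)).1 (hC1 _ (@MeasurableSet.compl Ω _ m1 hS) hcompl)
  have hsub : spt m2 π₂ ⊆ spt m1 π₁ := sInter_subset_of_mem ⟨hle12 _ hS, h2S⟩
  refine ⟨?_, ?_⟩
  · intro E F hE hF hES
    refine ⟨fun h0 => hC1 F hF ?_, ?_⟩
    · have := hle F hF
      rw [h0, nonpos_iff_eq_zero, mul_eq_zero] at this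
      exact this.resolve_left hc0.ne'
    · have hEe : πb01 (spt m1 π₁) * π₁ E = πb01 E := by
        rw [hmul E hE, inter_eq_self_of_subset_left (hES.trans hsub)]
      calc πb01 E * π₂ F = πb01 (spt m1 π₁) * (π₁ E * π₂ F) := by rw [← hEe, mul_assoc]
        _ ≤ πb01 (spt m1 π₁) * (π₂ E * π₁ F) := mul_le_mul_right (hcom E F hE hF hES).2 _
        _ = π₂ E * (πb01 (spt m1 π₁) * π₁ F) := by ring
        _ ≤ π₂ E * πb01 F := by
            gcongr
            exact hle F hF
  · refine lt_of_lt_of_le (ENNReal.mul_pos hc0.ne' hinf.ne') (le_iInf₂ fun F hF => ?_)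
    calc _ ≤ πb01 (spt m1 π₁) * (π₁ F / π₂ F) := by
            gcongr
            exact iInf₂_le F hF
      _ = (πb01 (spt m1 π₁) * π₁ F) / π₂ F := by rw [mul_div_assoc]
      _ ≤ πb01 F / π₂ F := by
            gcongr
            exact hle F hF.1
end
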